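/- Elimination of fixed letters from a circumscriptive atom: let φ = CIRC(ψ;P;Z) be a circumscriptive atom of L_CIRC and let Q be its set of fixed letters (the atoms of At not in P∪Z). For each q ∈ Q introduce a fresh atom q', let ψ' = ψ ∧ ⋀_{q∈Q}(q ↔ ¬q'), P' = P ∪ Q ∪ {q' : q ∈ Q}, and φ' = CIRC(ψ';P';Z). Then, modulo the set of all auxiliary letters q', the formulas φ and φ' are logically equivalent: M ⊨ φ iff some extension of M to the letters {q' : q ∈ Q} is a model of φ', and the restriction of every model of φ' to the original atoms is a model of φ. -/

import Mathlib

/-!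
STATEMENT 13: Elimination of fixed letters from a circumscriptive atom
(the de Kleer–Konolige transformation), for `L_CIRC`.
-/

namespace NestedCirc

universe u
variable {α : Type u}

/-- `M ≤_{P;Z} M'`. -/
def lePZ {β : Type*} (P Z M M' : Set β) : Prop :=
  M ∩ P ⊆ M' ∩ P ∧ M ∩ (P ∪ Z)ᶜ = M' ∩ (P ∪ Z)ᶜ

/-- `M <_{P;Z} M'` (strict preference). -/
def ltPZ {β : Type*} (P Z M M' : Set β) : Prop := lePZ P Z M M' ∧ ¬ lePZ P Z M' M

/-- Formulas of `L_CIRC` over atoms `β` (with a constant `tru` for building conjunctions). -/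
inductive LCirc (β : Type u) : Type u where
  | tru : LCirc β
  | atom : β → LCirc β
  | conj : LCirc β → LCirc β → LCirc β
  | neg : LCirc β → LCirc β
  | circ : LCirc β → Set β → Set β → LCirc β

/-- Satisfaction for `L_CIRC`: models of `CIRC(φ;P;Z)` are the `(P;Z)`-minimal models of `φ`. -/
def LCirc.sat {β : Type u} : LCirc β → Set β → Prop
  | .tru, _ => True
  | .atom a, M => a ∈ M
  | .conj φ ψ, M => φ.sat M ∧ ψ.sat M
  | .neg φ, M => ¬ φ.sat M
  | .circ φ P Z, M => φ.sat M ∧ ∀ N : Set β, φ.sat N → ¬ ltPZ P Z N M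

def LCirc.conjList {β : Type u} (l : List (LCirc β)) : LCirc β := l.foldr .conj .tru

/-- `a ↔ b` as an `L_CIRC` formula. -/
def LCirc.iffL {β : Type u} (a b : LCirc β) : LCirc β :=
  .conj (.neg (.conj a (.neg b))) (.neg (.conj (.neg a) b))

/-- Embedding of `L_CIRC` formulas over `α` into `L_CIRC` formulas over the extended
alphabet `α ⊕ α`, where `Sum.inl q` is the original atom `q` and `Sum.inr q` is the
fresh auxiliary atom `q'`. -/
def LCirc.emb : LCirc α → LCirc (α ⊕ α)
  | .tru => .tru
  | .atom a => .atom (Sum.inl a)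
  | .conj φ ψ => .conj φ.emb ψ.emb
  | .neg φ => .neg φ.emb
  | .circ φ P Z => .circ φ.emb (Sum.inl '' P) (Sum.inl '' Z)

variable [Fintype α]

/-- A list enumerating a set of atoms (the alphabet is finite). -/
noncomputable def listOf (S : Set α) : List α := (Set.toFinite S).toFinset.toList

/-- The formula `⋀_{q ∈ Q} (q ↔ ¬q')` over the extended alphabet. -/
noncomputable def iffConj (Q : Set α) : LCirc (α ⊕ α) :=
  LCirc.conjList ((listOf Q).map fun q =>
    LCirc.iffL (.atom (Sum.inl q)) (.neg (.atom (Sum.inr q))))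

theorem lePZ_iff {β : Type*} (P Z M M' : Set β) : lePZ P Z M M' ↔
    (∀ x ∈ P, x ∈ M → x ∈ M') ∧ (∀ x, x ∉ P → x ∉ Z → (x ∈ M ↔ x ∈ M')) := by
  simp only [lePZ, Set.subset_def, Set.ext_iff, Set.mem_inter_iff, Set.mem_compl_iff,
    Set.mem_union]
  constructor
  · rintro ⟨h1, h2⟩
    refine ⟨fun x hp hm => (h1 x ⟨hm, hp⟩).1, fun x hp hz => ?_⟩
    have := h2 x
    tauto
  · rintro ⟨h1, h2⟩
    refine ⟨fun x h => ⟨h1 x h.2 h.1, h.2⟩, fun x => ?_⟩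
    have := h2 x
    tauto

theorem lePZ_emb (P Z : Set α) (N N' : Set (α ⊕ α)) :
    lePZ (Sum.inl '' P) (Sum.inl '' Z) N N' ↔
      lePZ P Z (Sum.inl ⁻¹' N) (Sum.inl ⁻¹' N') ∧ Sum.inr ⁻¹' N = Sum.inr ⁻¹' N' := by
  simp only [lePZ_iff, Sum.forall, Set.mem_image, Set.ext_iff,
    Set.mem_preimage, Sum.inl.injEq, exists_eq_right, reduceCtorEq, and_false,
    exists_false, not_false_eq_true, forall_true_left, false_imp_iff, implies_true, and_true,
    and_assoc]

theorem emb_sat (ψ : LCirc α) (N : Set (α ⊕ α)) : ψ.emb.sat N ↔ ψ.sat (Sum.inl ⁻¹' N) := by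
  induction ψ generalizing N with
  | tru => simp [LCirc.emb, LCirc.sat]
  | atom a => simp [LCirc.emb, LCirc.sat]
  | conj a b iha ihb => simp [LCirc.emb, LCirc.sat, iha, ihb]
  | neg a ih => simp [LCirc.emb, LCirc.sat, ih]
  | circ a P Z ih =>
    simp only [LCirc.emb, LCirc.sat, ih, ltPZ, lePZ_emb]
    refine and_congr_right fun _ => ⟨fun h M hM hlt => ?_, fun h N' hN' hlt => ?_⟩
    · have e1 : Sum.inl ⁻¹' (Sum.inl '' M ∪ Sum.inr '' (Sum.inr ⁻¹' N) : Set (α ⊕ α)) = M := by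
        ext x; simp
      have e2 : Sum.inr ⁻¹' (Sum.inl '' M ∪ Sum.inr '' (Sum.inr ⁻¹' N) : Set (α ⊕ α))
          = Sum.inr ⁻¹' N := by
        ext x; simp
      have := h (Sum.inl '' M ∪ Sum.inr '' (Sum.inr ⁻¹' N))
      rw [e1, e2] at this
      exact this hM ⟨⟨hlt.1, rfl⟩, fun h' => hlt.2 h'.1⟩
    · exact h _ hN' ⟨hlt.1.1, fun h' => hlt.2 ⟨h', hlt.1.2.symm⟩⟩

theorem conjList_sat {β : Type u} (l : List (LCirc β)) (N : Set β) :
    (LCirc.conjList l).sat N ↔ ∀ φ ∈ l, φ.sat N := by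
  induction l with
  | nil => simp [LCirc.conjList, LCirc.sat]
  | cons a l ih =>
    have : LCirc.conjList (a :: l) = .conj a (LCirc.conjList l) := rfl
    rw [this]
    simp [LCirc.sat, ih]

theorem iffConj_sat (Q : Set α) (N : Set (α ⊕ α)) :
    (iffConj Q).sat N ↔ ∀ q ∈ Q, (Sum.inr q ∈ N ↔ Sum.inl q ∉ N) := by
  simp only [iffConj, conjList_sat, listOf, List.mem_map, Finset.mem_toList,
    Set.Finite.mem_toFinset, forall_exists_index, and_imp, forall_apply_eq_imp_iff₂,
    LCirc.iffL, LCirc.sat]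
  refine forall_congr' fun q => imp_congr_right fun _ => ?_
  tauto

theorem lePZ_ext (P Z : Set α) (N N' : Set (α ⊕ α))
    (h : ∀ q ∈ (P ∪ Z)ᶜ, (Sum.inr q ∈ N ↔ Sum.inl q ∉ N))
    (h' : ∀ q ∈ (P ∪ Z)ᶜ, (Sum.inr q ∈ N' ↔ Sum.inl q ∉ N')) :
    lePZ (Sum.inl '' P ∪ Sum.inl '' (P ∪ Z)ᶜ ∪ Sum.inr '' (P ∪ Z)ᶜ) (Sum.inl '' Z) N N' ↔
      lePZ P Z (Sum.inl ⁻¹' N) (Sum.inl ⁻¹' N') ∧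
        ∀ q ∈ P ∪ Z, (Sum.inr q ∈ N ↔ Sum.inr q ∈ N') := by
  simp only [Set.mem_compl_iff, Set.mem_union, not_or] at h h'
  simp only [lePZ_iff, Sum.forall, Set.mem_union, Set.mem_image, Set.mem_compl_iff,
    Set.mem_preimage, Sum.inl.injEq, Sum.inr.injEq, exists_eq_right, reduceCtorEq, and_false,
    exists_false, or_false, false_or, not_or, not_false_eq_true]
  constructor
  · rintro ⟨⟨a, b⟩, c, d⟩
    refine ⟨⟨fun x hx => a x (Or.inl hx), fun x hp hz => ?_⟩, fun x hx => ?_⟩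
    · have := a x; have := b x; have := h x; have := h' x; tauto
    · have := d x; tauto
  · rintro ⟨⟨a, b⟩, c⟩
    refine ⟨⟨fun x => ?_, fun x => ?_⟩, fun x => ?_, fun x => ?_⟩ <;>
    · have a := a x; have b := b x; have h := h x; have h' := h' x; have c := c x; grind

theorem circ_ext_sat (ψ : LCirc α) (P Z : Set α) (N : Set (α ⊕ α)) :
    (LCirc.circ (.conj ψ.emb (iffConj (P ∪ Z)ᶜ))
      (Sum.inl '' P ∪ Sum.inl '' (P ∪ Z)ᶜ ∪ Sum.inr '' (P ∪ Z)ᶜ) (Sum.inl '' Z)).sat N ↔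
    (∀ q ∈ (P ∪ Z)ᶜ, (Sum.inr q ∈ N ↔ Sum.inl q ∉ N)) ∧
      (LCirc.circ ψ P Z).sat (Sum.inl ⁻¹' N) := by
  simp only [LCirc.sat, emb_sat, iffConj_sat]
  constructor
  · rintro ⟨⟨h1, h2⟩, h3⟩
    refine ⟨h2, h1, fun M hM hlt => ?_⟩
    let N' : Set (α ⊕ α) := Sum.inl '' M ∪
      Sum.inr '' {q | (q ∈ (P ∪ Z)ᶜ ∧ q ∉ M) ∨ (q ∈ P ∪ Z ∧ Sum.inr q ∈ N)}
    have e1 : Sum.inl ⁻¹' N' = M := by ext x; simp [N']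
    have el : ∀ x, Sum.inl x ∈ N' ↔ x ∈ M := fun x => by simp [N']
    have er : ∀ x, Sum.inr x ∈ N' ↔
        (x ∈ (P ∪ Z)ᶜ ∧ x ∉ M) ∨ (x ∈ P ∪ Z ∧ Sum.inr x ∈ N) := fun x => by simp [N']
    have hN' : ∀ q ∈ (P ∪ Z)ᶜ, (Sum.inr q ∈ N' ↔ Sum.inl q ∉ N') := by
      intro q hq
      rw [el, er]
      have : q ∉ P ∪ Z := hq
      tauto
    refine h3 N' ⟨by rwa [e1], hN'⟩ ?_
    rw [ltPZ, lePZ_ext P Z _ _ hN' h2, lePZ_ext P Z _ _ h2 hN', e1]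
    refine ⟨⟨hlt.1, fun q hq => ?_⟩, fun h => hlt.2 h.1⟩
    rw [er]
    have : ¬ (q ∈ (P ∪ Z)ᶜ) := fun h => h hq
    tauto
  · rintro ⟨h2, h1, h3⟩
    refine ⟨⟨h1, h2⟩, fun N' hN' hlt => h3 _ hN'.1 ?_⟩
    rw [ltPZ, lePZ_ext P Z _ _ hN'.2 h2, lePZ_ext P Z _ _ h2 hN'.2] at hlt
    exact ⟨hlt.1.1, fun h => hlt.2 ⟨h, fun q hq => (hlt.1.2 q hq).symm⟩⟩

/-- Let `φ = CIRC(ψ;P;Z)` be a circumscriptive atom and let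
`Q = At ∖ (P ∪ Z)` be its set of fixed letters.  Put
`ψ' = ψ ∧ ⋀_{q∈Q}(q ↔ ¬q')`, `P' = P ∪ Q ∪ {q' : q ∈ Q}` and `φ' = CIRC(ψ';P';Z)`.
Then, modulo the auxiliary letters `q'`, `φ` and `φ'` are logically equivalent:
`M ⊨ φ` iff some extension of `M` to the auxiliary letters is a model of `φ'`, and
the restriction of every model of `φ'` to the original atoms is a model of `φ`. -/
theorem elim_fixed_letters (ψ : LCirc α) (P Z : Set α) (hPZ : Disjoint P Z) :
    (∀ M : Set α,
        (LCirc.circ ψ P Z).sat M ↔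
          ∃ N : Set (α ⊕ α), Sum.inl ⁻¹' N = M ∧
            (LCirc.circ (.conj ψ.emb (iffConj (P ∪ Z)ᶜ))
                (Sum.inl '' P ∪ Sum.inl '' (P ∪ Z)ᶜ ∪ Sum.inr '' (P ∪ Z)ᶜ)
                (Sum.inl '' Z)).sat N) ∧
    (∀ N : Set (α ⊕ α),
        (LCirc.circ (.conj ψ.emb (iffConj (P ∪ Z)ᶜ))
            (Sum.inl '' P ∪ Sum.inl '' (P ∪ Z)ᶜ ∪ Sum.inr '' (P ∪ Z)ᶜ)
            (Sum.inl '' Z)).sat N →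
          (LCirc.circ ψ P Z).sat (Sum.inl ⁻¹' N)) := by
  refine ⟨fun M => ⟨fun h => ?_, ?_⟩, fun N h => ((circ_ext_sat ψ P Z N).1 h).2⟩
  · have e1 : Sum.inl ⁻¹' (Sum.inl '' M ∪ Sum.inr '' Mᶜ : Set (α ⊕ α)) = M := by
      ext x; simp
    refine ⟨Sum.inl '' M ∪ Sum.inr '' Mᶜ, e1, ?_⟩
    rw [circ_ext_sat, e1]
    exact ⟨fun q _ => by simp, h⟩
  · rintro ⟨N, rfl, h⟩
    exact ((circ_ext_sat ψ P Z N).1 h).2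

end NestedCirc
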